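/- Let m ≥ 2, let F_m be a free group with free basis A of size m, let φ : F_m → ℤ be a surjective homomorphism, let a ∈ A ∪ A^{-1} be a letter with φ(a) maximal among all letters of A ∪ A^{-1}, and set C = φ(a). Let R be a normal subgroup of F_m contained in the kernel of φ, and let ρ = ρ(R) be the length of the shortest nontrivial element of R. If k ≥ 4 satisfies ρ ≥ Ck(2k-3) + 2k - 1, then the growth rate of the group F_m/R' with respect to the natural generators (the images of A) is at least (2m-1)·(4m(m-1)²/(2m-1)⁴)^{1/k}, where R' = [R,R] is the derived subgroup of R. -/

import Mathlib

open Filter Topology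

/-- Evaluate a word over the alphabet `A^{±1}` (a letter is a pair `(i, b)`, where
`b = true` means the generator `σ i` and `b = false` means its inverse) in a group. -/
def wordEval {m : ℕ} {G : Type*} [Group G] (σ : Fin m → G)
    (w : List (Fin m × Bool)) : G :=
  (w.map fun ℓ => if ℓ.2 then σ ℓ.1 else (σ ℓ.1)⁻¹).prod

/-- The ball `B(n) = {g ∈ G : ℓ(g) ≤ n}` of radius `n` in a group with respect to the
generating map `σ`: the set of elements represented by words of length at most `n`. -/
def ball {m : ℕ} {G : Type*} [Group G] (σ : Fin m → G) (n : ℕ) : Set G :=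
  {g | ∃ w : List (Fin m × Bool), w.length ≤ n ∧ wordEval σ w = g}

/-- The growth rate `ω(G, A) = lim_{n→∞} |B(n)|^{1/n}`; the limit exists by
submultiplicativity of `|B(n)|`, hence equals the `limsup`. -/
noncomputable def growthRate {m : ℕ} {G : Type*} [Group G] (σ : Fin m → G) : ℝ :=
  Filter.limsup (fun n : ℕ => ((ball σ n).ncard : ℝ) ^ (1 / (n : ℝ))) Filter.atTop

/-- A word is freely reduced iff it is its own free reduction. -/
def IsReducedWord {m : ℕ} (w : List (Fin m × Bool)) : Prop :=
  FreeGroup.reduce w = w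

/-- A *good* word w.r.t. `φ : F_m → ℤ` and the letter `a`. -/
def IsGoodWord {m : ℕ} (φ : FreeGroup (Fin m) → ℤ) (a : Fin m × Bool)
    (w : List (Fin m × Bool)) : Prop :=
  IsReducedWord w ∧ w.head? = some a ∧ w.getLast? ≠ some (a.1, !a.2) ∧
    0 < φ (FreeGroup.mk w)

/-! ### Part 1: counting good words -/

section counting

/-- inverse letter -/
def linv {m : ℕ} (x : Fin m × Bool) : Fin m × Bool := (x.1, !x.2)

theorem linv_linv {m : ℕ} (x : Fin m × Bool) : linv (linv x) = x := by
  simp [linv]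

theorem linv_ne {m : ℕ} (x : Fin m × Bool) : linv x ≠ x := by
  rcases x with ⟨i, b⟩
  cases b <;> simp [linv]

theorem linv_eq_comm {m : ℕ} {x y : Fin m × Bool} : linv x = y ↔ x = linv y := by
  constructor
  · rintro rfl; rw [linv_linv]
  · rintro rfl; rw [linv_linv]

theorem rel_iff {m : ℕ} (x y : Fin m × Bool) : (x.1 = y.1 → x.2 = y.2) ↔ y ≠ linv x := by
  rcases x with ⟨i, b⟩
  rcases y with ⟨j, c⟩
  simp only [linv, ne_eq, Prod.mk.injEq, not_and]
  constructor
  · rintro h rfl; cases b <;> cases c <;> simp_all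
  · rintro h rfl; cases b <;> cases c <;> simp_all

theorem red_cons {m : ℕ} (x : Fin m × Bool) (w : List (Fin m × Bool)) :
    FreeGroup.IsReduced (x :: w) ↔ FreeGroup.IsReduced w ∧ w.head? ≠ some (linv x) := by
  cases w with
  | nil => simp [FreeGroup.IsReduced.singleton, FreeGroup.IsReduced.nil]
  | cons y w => 
    rw [FreeGroup.isReduced_cons_cons, rel_iff]
    simp [and_comm]

theorem red_append {m : ℕ} (u v : List (Fin m × Bool)) :
    FreeGroup.IsReduced (u ++ v) ↔ FreeGroup.IsReduced u ∧ FreeGroup.IsReduced v ∧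
      ∀ x ∈ u.getLast?, ∀ y ∈ v.head?, y ≠ linv x := by
  unfold FreeGroup.IsReduced
  rw [List.isChain_append]
  simp only [rel_iff]

/-- flip all letters after the leading run of `a`s -/
def flipTail {m : ℕ} (a : Fin m × Bool) : List (Fin m × Bool) → List (Fin m × Bool)
  | [] => []
  | x :: w => if x = a then x :: flipTail a w else (x :: w).map linv

theorem flipTail_length {m : ℕ} (a : Fin m × Bool) (w : List (Fin m × Bool)) :
    (flipTail a w).length = w.length := by
  induction w with
  | nil => rfl
  | cons x w ih => 
    unfold flipTail
    split_ifs <;> simp [ih]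

theorem flipTail_head {m : ℕ} (a : Fin m × Bool) (w : List (Fin m × Bool))
    (h : w.head? ≠ some (linv a)) : (flipTail a w).head? ≠ some (linv a) := by
  cases w with
  | nil => simpa [flipTail] using h
  | cons x w =>
    unfold flipTail
    split_ifs with hx
    · simpa using h
    · simp only [List.map_cons, List.head?_cons, ne_eq, Option.some.injEq]
      rw [linv_eq_comm, linv_linv]; exact hx

theorem map_linv_red {m : ℕ} (w : List (Fin m × Bool)) (h : FreeGroup.IsReduced w) :
    FreeGroup.IsReduced (w.map linv) := by
  induction w with
  | nil => exact h
  | cons x w ih =>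
    rw [red_cons] at h
    rw [List.map_cons, red_cons]
    refine ⟨ih h.1, ?_⟩
    have := h.2
    cases w with
    | nil => simp
    | cons y w =>
      simp only [List.map_cons, List.head?_cons, ne_eq, Option.some.injEq] at this ⊢
      rw [linv_eq_comm, linv_linv]
      intro h'
      apply this
      exact h'

theorem flipTail_red {m : ℕ} (a : Fin m × Bool) (w : List (Fin m × Bool))
    (hr : FreeGroup.IsReduced w) :
    FreeGroup.IsReduced (flipTail a w) := by
  induction w with
  | nil => exact hr
  | cons x w ih =>
    unfold flipTail
    split_ifs with hx
    · subst hx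
      rw [red_cons] at hr ⊢
      exact ⟨ih hr.1, flipTail_head _ _ hr.2⟩
    · exact map_linv_red _ hr

theorem flipTail_flipTail {m : ℕ} (a : Fin m × Bool) (w : List (Fin m × Bool))
    (hr : FreeGroup.IsReduced w) (hh : w.head? ≠ some (linv a)) :
    flipTail a (flipTail a w) = w := by
  induction w with
  | nil => rfl
  | cons x w ih =>
    by_cases hx : x = a
    · subst hx
      rw [red_cons] at hr
      simp [flipTail, ih hr.1 hr.2]
    · have h1 : linv x ≠ a := by
        rw [ne_eq, linv_eq_comm]
        simpa using hh
      simp [flipTail, hx, h1, linv_linv, Function.comp_def]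

theorem flipTail_last {m : ℕ} (a : Fin m × Bool) (w : List (Fin m × Bool))
    (h : w.getLast? ≠ some a) :
    (flipTail a w).getLast? = w.getLast?.map linv := by
  induction w with
  | nil => rfl
  | cons x w ih =>
    unfold flipTail
    split_ifs with hx
    · subst hx
      cases w with
      | nil => simp at h
      | cons y w =>
        have h' : (y :: w).getLast? ≠ some x := by simpa [List.getLast?_cons_cons] using h
        have := ih h'
        rw [List.getLast?_cons_cons, ← this]
        have hl := flipTail_length x (y :: w)
        cases hf : flipTail x (y :: w) with
        | nil => simp [hf] at hl
        | cons z t => rw [List.getLast?_cons_cons]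
    · rw [List.getLast?_map]

theorem phi_one {m : ℕ} (φ : FreeGroup (Fin m) → ℤ)
    (hφ : ∀ x y : FreeGroup (Fin m), φ (x * y) = φ x + φ y) : φ 1 = 0 := by
  have := hφ 1 1
  rw [mul_one] at this
  linarith

theorem phi_append {m : ℕ} (φ : FreeGroup (Fin m) → ℤ)
    (hφ : ∀ x y : FreeGroup (Fin m), φ (x * y) = φ x + φ y) (u v : List (Fin m × Bool)) :
    φ (FreeGroup.mk (u ++ v)) = φ (FreeGroup.mk u) + φ (FreeGroup.mk v) := by
  rw [← FreeGroup.mul_mk, hφ]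

theorem phi_cons {m : ℕ} (φ : FreeGroup (Fin m) → ℤ)
    (hφ : ∀ x y : FreeGroup (Fin m), φ (x * y) = φ x + φ y) (x : Fin m × Bool)
    (v : List (Fin m × Bool)) :
    φ (FreeGroup.mk (x :: v)) = φ (FreeGroup.mk [x]) + φ (FreeGroup.mk v) :=
  phi_append φ hφ [x] v

theorem phi_nil {m : ℕ} (φ : FreeGroup (Fin m) → ℤ)
    (hφ : ∀ x y : FreeGroup (Fin m), φ (x * y) = φ x + φ y) :
    φ (FreeGroup.mk []) = 0 := phi_one φ hφ

theorem phi_linv {m : ℕ} (φ : FreeGroup (Fin m) → ℤ)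
    (hφ : ∀ x y : FreeGroup (Fin m), φ (x * y) = φ x + φ y) (x : Fin m × Bool) :
    φ (FreeGroup.mk [linv x]) = - φ (FreeGroup.mk [x]) := by
  have h : FreeGroup.mk [x] * FreeGroup.mk [linv x] = 1 := by
    have : FreeGroup.mk [linv x] = (FreeGroup.mk [x])⁻¹ := by
      rw [FreeGroup.inv_mk]; simp [FreeGroup.invRev, linv]
    rw [this, mul_inv_cancel]
  have h2 := hφ (FreeGroup.mk [x]) (FreeGroup.mk [linv x])
  rw [h, phi_one φ hφ] at h2
  linarith

theorem phi_map_linv {m : ℕ} (φ : FreeGroup (Fin m) → ℤ)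
    (hφ : ∀ x y : FreeGroup (Fin m), φ (x * y) = φ x + φ y) (w : List (Fin m × Bool)) :
    φ (FreeGroup.mk (w.map linv)) = - φ (FreeGroup.mk w) := by
  induction w with
  | nil => simp [phi_nil φ hφ]
  | cons x w ih =>
    rw [List.map_cons, phi_cons φ hφ, phi_cons φ hφ x w, ih, phi_linv φ hφ]
    ring

theorem phi_flipTail {m : ℕ} (φ : FreeGroup (Fin m) → ℤ)
    (hφ : ∀ x y : FreeGroup (Fin m), φ (x * y) = φ x + φ y) (a : Fin m × Bool)
    (ha : 0 < φ (FreeGroup.mk [a])) (w : List (Fin m × Bool)) :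
    0 ≤ φ (FreeGroup.mk w) + φ (FreeGroup.mk (flipTail a w)) := by
  induction w with
  | nil => simp [flipTail, phi_nil φ hφ]
  | cons x w ih =>
    unfold flipTail
    split_ifs with hx
    · subst hx
      rw [phi_cons φ hφ, phi_cons φ hφ x (flipTail _ _)]
      linarith
    · rw [phi_map_linv φ hφ]; simp

/-- Reduced words of length `n` with first letter `a` and last letter not `a⁻¹`. -/
def TW {m : ℕ} (a : Fin m × Bool) (n : ℕ) (w : List (Fin m × Bool)) : Prop :=
  FreeGroup.IsReduced w ∧ w.length = n ∧ w.head? = some a ∧ w.getLast? ≠ some (linv a)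

theorem TW_snoc {m : ℕ} (a : Fin m × Bool) (n : ℕ) (w : List (Fin m × Bool)) :
    TW a (n + 2) (w ++ [a]) ↔ TW a (n + 1) w := by
  unfold TW
  rw [red_append]
  constructor
  · rintro ⟨⟨h1, -, h2⟩, h3, h4, h5⟩
    have hl : w.length = n + 1 := by simpa using h3
    refine ⟨h1, hl, ?_, ?_⟩
    · cases w with
      | nil => simp at hl
      | cons x w => simpa using h4
    · intro h
      have := h2 _ h a (by simp)
      exact this (linv_linv a).symm
  · rintro ⟨h1, h2, h3, h4⟩
    refine ⟨⟨h1, FreeGroup.IsReduced.singleton, ?_⟩, by simpa using h2, ?_, ?_⟩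
    · intro x hx y hy hxy
      simp only [List.head?_cons, Option.mem_def, Option.some.injEq] at hy
      apply h4
      rw [hx, hy, hxy, linv_linv]
    · cases w with
      | nil => simp at h2
      | cons x w => simpa using h3
    · simpa using (linv_ne a).symm

theorem exists_iota {m : ℕ} (φ : FreeGroup (Fin m) → ℤ)
    (hφ : ∀ x y : FreeGroup (Fin m), φ (x * y) = φ x + φ y) (a : Fin m × Bool)
    (ha : 0 < φ (FreeGroup.mk [a])) (n : ℕ) :
    ∃ ι : List (Fin m × Bool) → List (Fin m × Bool),
      (∀ w, TW a (n + 1) w → TW a (n + 1) (ι w) ∧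
        0 < φ (FreeGroup.mk w) + φ (FreeGroup.mk (ι w))) ∧
      (∀ w v, TW a (n + 1) w → TW a (n + 1) v → ι w = ι v → w = v) := by
  induction n with
  | zero =>
    refine ⟨id, ?_, fun w v _ _ h => h⟩
    intro w hw
    refine ⟨hw, ?_⟩
    obtain ⟨-, h2, h3, -⟩ := hw
    match w, h2, h3 with
    | [x], _, h3 =>
      simp only [List.head?_cons, Option.some.injEq] at h3
      subst h3
      simp only [id]
      linarith
  | succ n ih =>
    obtain ⟨ι, h1, h2⟩ := ih
    have key : ∀ w, TW a (n + 2) w → w.getLast? ≠ some a →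
        TW a (n + 2) (flipTail a w) ∧ (flipTail a w).getLast? ≠ some a ∧
        0 < φ (FreeGroup.mk w) + φ (FreeGroup.mk (flipTail a w)) ∧
        flipTail a (flipTail a w) = w := by
      rintro w ⟨hr, hl, hh, hla⟩ hne
      have e1 := flipTail_last a w hne
      refine ⟨⟨flipTail_red a w hr, by rw [flipTail_length, hl], ?_, ?_⟩, ?_, ?_, ?_⟩
      · cases w with
        | nil => simp at hh
        | cons x w =>
          simp only [List.head?_cons, Option.some.injEq] at hh
          simp [flipTail, hh]
      · rw [e1]
        intro h
        rw [Option.map_eq_some_iff] at h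
        obtain ⟨y, hy, hy2⟩ := h
        rw [linv_eq_comm, linv_linv] at hy2
        exact hne (hy2 ▸ hy)
      · rw [e1]
        intro h
        rw [Option.map_eq_some_iff] at h
        obtain ⟨y, hy, hy2⟩ := h
        rw [linv_eq_comm] at hy2
        exact hla (hy2 ▸ hy)
      · cases w with
        | nil => simp at hh
        | cons x w =>
          simp only [List.head?_cons, Option.some.injEq] at hh
          subst hh
          have : flipTail x (x :: w) = x :: flipTail x w := by simp [flipTail]
          rw [this, phi_cons φ hφ, phi_cons φ hφ x (flipTail _ _)]
          have := phi_flipTail φ hφ x ha w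
          linarith
      · apply flipTail_flipTail a w hr
        rw [hh]
        simpa using (linv_ne a).symm
    have decomp : ∀ w : List (Fin m × Bool), w.getLast? = some a → w = w.dropLast ++ [a] := by
      intro w hw
      exact (List.dropLast_append_getLast? a hw).symm
    refine ⟨fun w => if w.getLast? = some a then ι w.dropLast ++ [a] else flipTail a w, ?_, ?_⟩
    · intro w hw
      dsimp only
      split_ifs with hc
      · have hd := decomp w hc
        rw [hd, TW_snoc] at hw
        obtain ⟨g1, g2⟩ := h1 _ hw
        refine ⟨(TW_snoc _ _ _).2 g1, ?_⟩
        have e : φ (FreeGroup.mk w) = φ (FreeGroup.mk w.dropLast) + φ (FreeGroup.mk [a]) := by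
          rw [← phi_append φ hφ, ← hd]
        rw [e, phi_append φ hφ]
        linarith
      · exact ⟨(key w hw hc).1, (key w hw hc).2.2.1⟩
    · intro w v hw hv
      dsimp only
      split_ifs with hc hc' hc'
      · intro h
        have hd := decomp w hc
        have hd' := decomp v hc'
        rw [hd, TW_snoc] at hw
        rw [hd', TW_snoc] at hv
        rw [hd, hd', h2 _ _ hw hv (List.append_cancel_right h)]
      · intro h
        exfalso
        apply (key v hv hc').2.1
        rw [← h]; simp
      · intro h
        exfalso
        apply (key w hw hc).2.1
        rw [h]; simp
      · intro h
        rw [← (key w hw hc).2.2.2, h, (key v hv hc').2.2.2]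

theorem snoc_count {m : ℕ} (S : Finset (List (Fin m × Bool))) (d : ℕ)
    (f : List (Fin m × Bool) → Finset (Fin m × Bool)) (hf : ∀ w ∈ S, d ≤ (f w).card) :
    ∃ S' : Finset (List (Fin m × Bool)), S.card * d ≤ S'.card ∧
      ∀ w ∈ S', ∃ u ∈ S, ∃ x ∈ f u, w = u ++ [x] := by
  classical
  refine ⟨(S.sigma f).image (fun p => p.1 ++ [p.2]), ?_, ?_⟩
  · rw [Finset.card_image_of_injective, Finset.card_sigma, ← smul_eq_mul]
    · exact Finset.card_nsmul_le_sum _ _ _ hf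
    · rintro ⟨u, x⟩ ⟨v, y⟩ h
      simp only at h
      have := List.append_inj' h rfl
      simp only [List.cons.injEq, and_true] at this
      rw [this.1, this.2]
  · intro w hw
    simp only [Finset.mem_image, Finset.mem_sigma] at hw
    obtain ⟨⟨u, x⟩, ⟨h1, h2⟩, rfl⟩ := hw
    exact ⟨u, h1, x, h2, rfl⟩

theorem exists_PW {m : ℕ} (a : Fin m × Bool) (n : ℕ) :
    ∃ S : Finset (List (Fin m × Bool)), (2 * m - 1) ^ n ≤ S.card ∧
      ∀ w ∈ S, FreeGroup.IsReduced w ∧ w.length = n + 1 ∧ w.head? = some a := by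
  classical
  induction n with
  | zero =>
    refine ⟨{[a]}, by simp, ?_⟩
    intro w hw
    rw [Finset.mem_singleton] at hw
    subst hw
    exact ⟨FreeGroup.IsReduced.singleton, rfl, rfl⟩
  | succ n ih =>
    obtain ⟨S, h1, h2⟩ := ih
    obtain ⟨S', h3, h4⟩ := snoc_count S (2 * m - 1)
      (fun w => Finset.univ.erase (linv (w.getLast?.getD a))) (by
        intro w _
        rw [Finset.card_erase_of_mem (Finset.mem_univ _)]
        simp [mul_comm])
    refine ⟨S', ?_, ?_⟩
    · rw [pow_succ]
      exact (Nat.mul_le_mul_right _ h1).trans h3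
    · intro w hw
      obtain ⟨u, hu, x, hx, rfl⟩ := h4 w hw
      obtain ⟨g1, g2, g3⟩ := h2 u hu
      refine ⟨?_, by simp [g2], ?_⟩
      · rw [red_append]
        refine ⟨g1, FreeGroup.IsReduced.singleton, ?_⟩
        intro z hz y hy
        simp only [List.head?_cons, Option.mem_def, Option.some.injEq] at hy hz
        rw [hz] at hx
        subst hy
        simpa using hx
      · cases u with
        | nil => simp at g2
        | cons z u => simpa using g3

theorem exists_TW {m : ℕ} (a : Fin m × Bool) (n : ℕ) :
    ∃ S : Finset (List (Fin m × Bool)), (2 * m - 1) ^ n * (2 * m - 2) ≤ S.card ∧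
      ∀ w ∈ S, TW a (n + 2) w := by
  classical
  obtain ⟨S, h1, h2⟩ := exists_PW a n
  obtain ⟨S', h3, h4⟩ := snoc_count S (2 * m - 2)
      (fun w => (Finset.univ.erase (linv (w.getLast?.getD a))).erase (linv a)) (by
        intro w _
        refine le_trans ?_ Finset.pred_card_le_card_erase
        rw [Finset.card_erase_of_mem (Finset.mem_univ _)]
        simp [mul_comm]
        omega)
  refine ⟨S', (Nat.mul_le_mul_right _ h1).trans h3, ?_⟩
  intro w hw
  obtain ⟨u, hu, x, hx, rfl⟩ := h4 w hw
  obtain ⟨g1, g2, g3⟩ := h2 u hu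
  refine ⟨?_, by simp [g2], ?_, ?_⟩
  · rw [red_append]
    refine ⟨g1, FreeGroup.IsReduced.singleton, ?_⟩
    intro z hz y hy
    simp only [List.head?_cons, Option.mem_def, Option.some.injEq] at hy hz
    rw [hz] at hx
    subst hy
    simp at hx
    exact hx.2
  · cases u with
    | nil => simp at g2
    | cons z u => simpa using g3
  · simp at hx
    simpa using hx.1

/-- Good words of length `k`. -/
def GW {m : ℕ} (φ : FreeGroup (Fin m) → ℤ) (a : Fin m × Bool) (k : ℕ)
    (w : List (Fin m × Bool)) : Prop := TW a k w ∧ 0 < φ (FreeGroup.mk w)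

theorem exists_GW {m : ℕ} (φ : FreeGroup (Fin m) → ℤ)
    (hφ : ∀ x y : FreeGroup (Fin m), φ (x * y) = φ x + φ y) (a : Fin m × Bool)
    (ha : 0 < φ (FreeGroup.mk [a])) (n : ℕ) :
    ∃ S : Finset (List (Fin m × Bool)), (2 * m - 1) ^ n * (2 * m - 2) ≤ 2 * S.card ∧
      ∀ w ∈ S, GW φ a (n + 2) w := by
  classical
  obtain ⟨T, h1, h2⟩ := exists_TW a n
  obtain ⟨ι, h3, h4⟩ := exists_iota φ hφ a ha (n + 1)
  set A := T.filter (fun w => 0 < φ (FreeGroup.mk w))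
  set B := T.filter (fun w => ¬ 0 < φ (FreeGroup.mk w))
  have hAB : A.card + B.card = T.card := Finset.card_filter_add_card_filter_not _
  have hB : (B.image ι).card = B.card := by
    apply Finset.card_image_of_injOn
    intro w hw v hv h
    have hw' := (Finset.mem_filter.1 (Finset.mem_coe.1 hw)).1
    have hv' := (Finset.mem_filter.1 (Finset.mem_coe.1 hv)).1
    exact h4 w v (h2 w hw') (h2 v hv') h
  refine ⟨A ∪ B.image ι, ?_, ?_⟩
  · have c1 := Finset.card_le_card (Finset.subset_union_left : A ⊆ A ∪ B.image ι)
    have c2 := Finset.card_le_card (Finset.subset_union_right : B.image ι ⊆ A ∪ B.image ι)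
    omega
  · intro w hw
    rcases Finset.mem_union.1 hw with hw | hw
    · obtain ⟨g1, g2⟩ := Finset.mem_filter.1 hw
      exact ⟨h2 w g1, g2⟩
    · obtain ⟨v, hv, rfl⟩ := Finset.mem_image.1 hw
      obtain ⟨g1, g2⟩ := Finset.mem_filter.1 hv
      obtain ⟨g3, g4⟩ := h3 v (h2 v g1)
      exact ⟨g3, by linarith⟩

end counting

/-! ### Part 2: flows -/

section flows

variable {m : ℕ} (R : Subgroup (FreeGroup (Fin m))) [hR : R.Normal]

open scoped Classical in
/-- One step of the skew product over the Cayley graph of `F/R`, which counts the signed number of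
crossings of the edge `(q₀, j₀)`. -/
noncomputable def stepPerm (q₀ : FreeGroup (Fin m) ⧸ R) (j₀ j : Fin m) :
    Equiv.Perm ((FreeGroup (Fin m) ⧸ R) × ℤ) where
  toFun p := (p.1 * QuotientGroup.mk (FreeGroup.of j), p.2 + if j = j₀ ∧ p.1 = q₀ then 1 else 0)
  invFun p := (p.1 * (QuotientGroup.mk (FreeGroup.of j))⁻¹,
    p.2 - if j = j₀ ∧ p.1 * (QuotientGroup.mk (FreeGroup.of j))⁻¹ = q₀ then 1 else 0)
  left_inv p := by simp
  right_inv p := by simp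

/-- The skew product action (as a homomorphism to the opposite group). -/
noncomputable def flowHom (q₀ : FreeGroup (Fin m) ⧸ R) (j₀ : Fin m) :
    FreeGroup (Fin m) →* (Equiv.Perm ((FreeGroup (Fin m) ⧸ R) × ℤ))ᵐᵒᵖ :=
  FreeGroup.lift (fun j => MulOpposite.op (stepPerm R q₀ j₀ j))

/-- Action of an element. -/
noncomputable def act (q₀ : FreeGroup (Fin m) ⧸ R) (j₀ : Fin m) (g : FreeGroup (Fin m)) :
    Equiv.Perm ((FreeGroup (Fin m) ⧸ R) × ℤ) := (flowHom R q₀ j₀ g).unop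

theorem act_mul (q₀ : FreeGroup (Fin m) ⧸ R) (j₀ : Fin m) (g h : FreeGroup (Fin m)) 
    (p : (FreeGroup (Fin m) ⧸ R) × ℤ) :
    act R q₀ j₀ (g * h) p = act R q₀ j₀ h (act R q₀ j₀ g p) := by
  simp [act]

theorem act_one (q₀ : FreeGroup (Fin m) ⧸ R) (j₀ : Fin m) 
    (p : (FreeGroup (Fin m) ⧸ R) × ℤ) :
    act R q₀ j₀ 1 p = p := by
  simp [act]

theorem act_of (q₀ : FreeGroup (Fin m) ⧸ R) (j₀ j : Fin m) :
    act R q₀ j₀ (FreeGroup.of j) = stepPerm R q₀ j₀ j := by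
  simp [act, flowHom]

theorem act_of_inv (q₀ : FreeGroup (Fin m) ⧸ R) (j₀ j : Fin m) :
    act R q₀ j₀ (FreeGroup.of j)⁻¹ = (stepPerm R q₀ j₀ j)⁻¹ := by
  simp [act, flowHom]

theorem act_form (q₀ : FreeGroup (Fin m) ⧸ R) (j₀ : Fin m) (g : FreeGroup (Fin m)) :
    ∃ c : FreeGroup (Fin m) ⧸ R → ℤ, ∀ q n, act R q₀ j₀ g (q, n) =
      (q * QuotientGroup.mk g, n + c q) := by
  induction g using FreeGroup.induction_on with
  | C1 => exact ⟨fun _ => 0, fun q n => by rw [act_one]; simp⟩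
  | of j =>
    classical
    refine ⟨fun q => if j = j₀ ∧ q = q₀ then 1 else 0, fun q n => ?_⟩
    rw [act_of]
    simp only [stepPerm, Equiv.coe_fn_mk]
  | inv_of j _ =>
    classical
    refine ⟨fun q => - if j = j₀ ∧ q * (QuotientGroup.mk (FreeGroup.of j))⁻¹ = q₀ then 1 else 0,
      fun q n => ?_⟩
    rw [act_of_inv]
    change (stepPerm R q₀ j₀ j).symm (q, n) = _
    simp only [stepPerm, Equiv.coe_fn_symm_mk, sub_eq_add_neg, QuotientGroup.mk_inv]
  | mul g h hg hh =>
    obtain ⟨c, hc⟩ := hg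
    obtain ⟨d, hd⟩ := hh
    refine ⟨fun q => c q + d (q * QuotientGroup.mk g), fun q n => ?_⟩
    rw [act_mul, hc, hd]
    simp [mul_assoc, add_assoc]

theorem act_comm (q₀ : FreeGroup (Fin m) ⧸ R) (j₀ : Fin m) {g h : FreeGroup (Fin m)}
    (hgh : (QuotientGroup.mk g : FreeGroup (Fin m) ⧸ ⁅R, R⁆) = QuotientGroup.mk h) :
    act R q₀ j₀ g = act R q₀ j₀ h := by
  have hle : ⁅R, R⁆ ≤ (flowHom R q₀ j₀).ker := by
    rw [Subgroup.commutator_le]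
    intro r hr s hs
    rw [MonoidHom.mem_ker, map_commutatorElement, commutatorElement_eq_one_iff_mul_comm,
      ← map_mul, ← map_mul]
    apply MulOpposite.unop_injective
    change act R q₀ j₀ (r * s) = act R q₀ j₀ (s * r)
    obtain ⟨c, hc⟩ := act_form R q₀ j₀ r
    obtain ⟨d, hd⟩ := act_form R q₀ j₀ s
    have er : (QuotientGroup.mk r : FreeGroup (Fin m) ⧸ R) = 1 := (QuotientGroup.eq_one_iff r).2 hr
    have es : (QuotientGroup.mk s : FreeGroup (Fin m) ⧸ R) = 1 := (QuotientGroup.eq_one_iff s).2 hs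
    ext1 ⟨q, n⟩
    rw [act_mul, act_mul, hc, hd, hd, hc, er, es]
    simp only [mul_one, Prod.mk.injEq, true_and]
    ring
  have h1 : g⁻¹ * h ∈ (flowHom R q₀ j₀).ker := hle (QuotientGroup.eq.1 hgh)
  have h2 : flowHom R q₀ j₀ g = flowHom R q₀ j₀ h := (MonoidHom.eq_iff _).2 (by
    have := (flowHom R q₀ j₀).ker.inv_mem h1
    simpa using this)
  unfold act
  rw [h2]

theorem mk_true (j : Fin m) : FreeGroup.mk [(j, true)] = FreeGroup.of j := rfl

theorem mk_false (j : Fin m) : FreeGroup.mk [(j, false)] = (FreeGroup.of j)⁻¹ := by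
  simp [FreeGroup.of, FreeGroup.inv_mk, FreeGroup.invRev]

theorem act_true (q₀ : FreeGroup (Fin m) ⧸ R) (j₀ j : Fin m) (q : FreeGroup (Fin m) ⧸ R) (n : ℤ) :
    ((j = j₀ ∧ q = q₀) ∧ act R q₀ j₀ (FreeGroup.mk [(j, true)]) (q, n) =
      (q * QuotientGroup.mk (FreeGroup.mk [(j, true)]), n + 1)) ∨ 
    (¬ (j = j₀ ∧ q = q₀) ∧ act R q₀ j₀ (FreeGroup.mk [(j, true)]) (q, n) =
      (q * QuotientGroup.mk (FreeGroup.mk [(j, true)]), n)) := by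
  by_cases h : j = j₀ ∧ q = q₀
  · left
    refine ⟨h, ?_⟩
    rw [mk_true, act_of]
    simp [stepPerm, h]
  · right
    refine ⟨h, ?_⟩
    rw [mk_true, act_of]
    simp [stepPerm, h]

theorem act_false (q₀ : FreeGroup (Fin m) ⧸ R) (j₀ j : Fin m) (q : FreeGroup (Fin m) ⧸ R)
    (n : ℤ) :
    ((j = j₀ ∧ q * QuotientGroup.mk (FreeGroup.mk [(j, false)]) = q₀) ∧
      act R q₀ j₀ (FreeGroup.mk [(j, false)]) (q, n) =
      (q * QuotientGroup.mk (FreeGroup.mk [(j, false)]), n - 1)) ∨ 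
    (¬ (j = j₀ ∧ q * QuotientGroup.mk (FreeGroup.mk [(j, false)]) = q₀) ∧
      act R q₀ j₀ (FreeGroup.mk [(j, false)]) (q, n) =
      (q * QuotientGroup.mk (FreeGroup.mk [(j, false)]), n)) := by
  have e : act R q₀ j₀ (FreeGroup.mk [(j, false)]) (q, n) = (stepPerm R q₀ j₀ j).symm (q, n) := by
    rw [mk_false, act_of_inv]; rfl
  rw [e]
  by_cases h : j = j₀ ∧ q * QuotientGroup.mk (FreeGroup.mk [(j, false)]) = q₀
  · left
    refine ⟨h, ?_⟩
    rw [mk_false] at h ⊢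
    simp only [stepPerm, Equiv.coe_fn_symm_mk]
    rw [QuotientGroup.mk_inv] at *
    rw [if_pos h]
  · right
    refine ⟨h, ?_⟩
    rw [mk_false] at h ⊢
    simp only [stepPerm, Equiv.coe_fn_symm_mk]
    rw [QuotientGroup.mk_inv] at *
    rw [if_neg h, sub_zero]

/-- There is a flow counter separating a path that crosses the edge `c → c y` once
from the paths that avoid the vertex `c y`. -/
theorem exists_edge (hR1 : ∀ j, FreeGroup.of j ∉ R) (u : FreeGroup (Fin m) ⧸ R) (y : Fin m × Bool) :
    ∃ (q₀ : FreeGroup (Fin m) ⧸ R) (j₀ : Fin m), 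
      (∀ x q n, q ≠ u * QuotientGroup.mk (FreeGroup.mk [y]) →
        q * QuotientGroup.mk (FreeGroup.mk [x]) ≠ u * QuotientGroup.mk (FreeGroup.mk [y]) →
        act R q₀ j₀ (FreeGroup.mk [x]) (q, n) = (q * QuotientGroup.mk (FreeGroup.mk [x]), n)) ∧
      (∃ e : ℤ, e ≠ 0 ∧ act R q₀ j₀ (FreeGroup.mk [y]) (u, 0) =
        (u * QuotientGroup.mk (FreeGroup.mk [y]), e)) ∧
      (∀ x n, x ≠ linv y →
        act R q₀ j₀ (FreeGroup.mk [x]) (u * QuotientGroup.mk (FreeGroup.mk [y]), n) =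
        (u * QuotientGroup.mk (FreeGroup.mk [y]) * QuotientGroup.mk (FreeGroup.mk [x]), n)) := by
  have hne : ∀ j, (QuotientGroup.mk (FreeGroup.mk [(j, true)]) : FreeGroup (Fin m) ⧸ R) ≠ 1 := by
    intro j h
    exact hR1 j ((QuotientGroup.eq_one_iff _).1 h)
  have hinv : ∀ j, (QuotientGroup.mk (FreeGroup.mk [(j, false)]) : FreeGroup (Fin m) ⧸ R) =
      (QuotientGroup.mk (FreeGroup.mk [(j, true)]))⁻¹ := by
    intro j
    rw [mk_false, mk_true]; rfl
  rcases y with ⟨j₀, b⟩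
  cases b with
  | true =>
    refine ⟨u, j₀, ?_, ?_, ?_⟩
    · rintro ⟨j, b⟩ q n h1 h2
      cases b with
      | true =>
        rcases act_true R u j₀ j q n with ⟨⟨rfl, rfl⟩, h⟩ | ⟨_, h⟩
        · exact absurd rfl h2
        · exact h
      | false =>
        rcases act_false R u j₀ j q n with ⟨⟨rfl, h3⟩, h⟩ | ⟨_, h⟩
        · exfalso
          apply h1
          rw [← h3, hinv]; simp
        · exact h
    · refine ⟨1, one_ne_zero, ?_⟩
      rcases act_true R u j₀ j₀ u 0 with ⟨_, h⟩ | ⟨h3, h⟩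
      · simpa using h
      · exact absurd ⟨rfl, rfl⟩ h3
    · rintro ⟨j, b⟩ n hx
      cases b with
      | true =>
        rcases act_true R u j₀ j (u * QuotientGroup.mk (FreeGroup.mk [(j₀, true)])) n with
          ⟨⟨_, h3⟩, h⟩ | ⟨_, h⟩
        · exact absurd (mul_eq_left.1 h3) (hne j₀)
        · exact h
      | false =>
        rcases act_false R u j₀ j (u * QuotientGroup.mk (FreeGroup.mk [(j₀, true)])) n with
          ⟨⟨rfl, h3⟩, h⟩ | ⟨_, h⟩
        · exact absurd rfl hx
        · exact h
  | false =>
    refine ⟨u * QuotientGroup.mk (FreeGroup.mk [(j₀, false)]), j₀, ?_, ?_, ?_⟩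
    · rintro ⟨j, b⟩ q n h1 h2
      cases b with
      | true =>
        rcases act_true R (u * QuotientGroup.mk (FreeGroup.mk [(j₀, false)])) j₀ j q n with
          ⟨⟨_, h3⟩, h⟩ | ⟨_, h⟩
        · exact absurd h3 h1
        · exact h
      | false =>
        rcases act_false R (u * QuotientGroup.mk (FreeGroup.mk [(j₀, false)])) j₀ j q n with
          ⟨⟨_, h3⟩, h⟩ | ⟨_, h⟩
        · exact absurd h3 h2
        · exact h
    · refine ⟨-1, by norm_num, ?_⟩
      rcases act_false R (u * QuotientGroup.mk (FreeGroup.mk [(j₀, false)])) j₀ j₀ u 0 with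
        ⟨_, h⟩ | ⟨h3, h⟩
      · simpa using h
      · exact absurd ⟨rfl, rfl⟩ h3
    · rintro ⟨j, b⟩ n hx
      cases b with
      | true =>
        rcases act_true R (u * QuotientGroup.mk (FreeGroup.mk [(j₀, false)])) j₀ j
          (u * QuotientGroup.mk (FreeGroup.mk [(j₀, false)])) n with ⟨⟨rfl, h3⟩, h⟩ | ⟨_, h⟩
        · exact absurd rfl hx
        · exact h
      | false =>
        rcases act_false R (u * QuotientGroup.mk (FreeGroup.mk [(j₀, false)])) j₀ j
          (u * QuotientGroup.mk (FreeGroup.mk [(j₀, false)])) n with ⟨⟨rfl, h3⟩, h⟩ | ⟨_, h⟩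
        · exfalso
          have := mul_eq_left.1 h3
          rw [hinv, inv_eq_one] at this
          exact hne _ this
        · exact h

theorem mk_cons (x : Fin m × Bool) (w : List (Fin m × Bool)) :
    FreeGroup.mk (x :: w) = FreeGroup.mk [x] * FreeGroup.mk w := by
  rw [FreeGroup.mul_mk]; rfl

theorem act_avoid (q₀ z : FreeGroup (Fin m) ⧸ R) (j₀ : Fin m)
    (hz : ∀ x q n, q ≠ z → q * QuotientGroup.mk (FreeGroup.mk [x]) ≠ z →
        act R q₀ j₀ (FreeGroup.mk [x]) (q, n) = (q * QuotientGroup.mk (FreeGroup.mk [x]), n))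
    (w : List (Fin m × Bool)) (q : FreeGroup (Fin m) ⧸ R) (n : ℤ)
    (hw : ∀ p, p <+: w → q * QuotientGroup.mk (FreeGroup.mk p) ≠ z) :
    act R q₀ j₀ (FreeGroup.mk w) (q, n) = (q * QuotientGroup.mk (FreeGroup.mk w), n) := by
  induction w generalizing q n with
  | nil => 
    rw [← FreeGroup.one_eq_mk, act_one]; simp
  | cons x w ih =>
    have h0 : q ≠ z := by
      have := hw [] (List.nil_prefix)
      rw [← FreeGroup.one_eq_mk] at this
      simpa using this
    have h1 := hw [x] (by simp)
    rw [mk_cons, act_mul, hz x q n h0 h1, ih]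
    · rw [QuotientGroup.mk_mul, mul_assoc]
    · intro p hp
      have := hw (x :: p) (by simpa using hp)
      rw [mk_cons, QuotientGroup.mk_mul, ← mul_assoc] at this
      exact this

/-- Separation: `V = c y V'` passes through the vertex `c y` exactly once, `W` never does. -/
theorem separation (hR1 : ∀ j, FreeGroup.of j ∉ R) (c V' W : List (Fin m × Bool))
    (y : Fin m × Bool) (hred : FreeGroup.IsReduced (c ++ y :: V'))
    (hW : ∀ p, p <+: W → (QuotientGroup.mk (FreeGroup.mk p) : FreeGroup (Fin m) ⧸ R) ≠
      QuotientGroup.mk (FreeGroup.mk (c ++ [y])))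
    (hV : ∀ p, p <+: c ++ y :: V' → 
      (QuotientGroup.mk (FreeGroup.mk p) : FreeGroup (Fin m) ⧸ R) =
      QuotientGroup.mk (FreeGroup.mk (c ++ [y])) → p = c ++ [y]) :
    (QuotientGroup.mk (FreeGroup.mk (c ++ y :: V')) : FreeGroup (Fin m) ⧸ ⁅R, R⁆) ≠
      QuotientGroup.mk (FreeGroup.mk W) := by
  intro heq
  obtain ⟨q₀, j₀, h1, ⟨e, he, h2⟩, h3⟩ :=
    exists_edge R hR1 (QuotientGroup.mk (FreeGroup.mk c)) y
  have hz : (QuotientGroup.mk (FreeGroup.mk c) : FreeGroup (Fin m) ⧸ R) *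
      QuotientGroup.mk (FreeGroup.mk [y]) = QuotientGroup.mk (FreeGroup.mk (c ++ [y])) := by
    rw [← QuotientGroup.mk_mul, FreeGroup.mul_mk]
  rw [hz] at h1 h2 h3
  have hact := act_comm R q₀ j₀ heq
  have aW := act_avoid R q₀ _ j₀ h1 W 1 0 (by simpa using hW)
  have ac := act_avoid R q₀ _ j₀ h1 c 1 0 (by
    intro p hp h
    rw [one_mul] at h
    have h' := hV p (hp.trans (List.prefix_append _ _)) h
    have := hp.length_le
    rw [h'] at this
    simp at this)
  rw [← hact, ← FreeGroup.mul_mk, mk_cons, act_mul, act_mul, ac, one_mul, h2] at aW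
  cases V' with
  | nil =>
    rw [← FreeGroup.one_eq_mk, act_one] at aW
    exact he (congrArg Prod.snd aW)
  | cons x V'' =>
    have hx : x ≠ linv y := by
      rw [red_append, red_cons] at hred
      simpa using hred.2.1.2
    rw [mk_cons, act_mul, h3 x e hx, act_avoid R q₀ _ j₀ h1 V''] at aW
    · exact he (congrArg Prod.snd aW)
    · intro p hp h
      rw [← QuotientGroup.mk_mul, ← QuotientGroup.mk_mul, FreeGroup.mul_mk, FreeGroup.mul_mk] at h
      have h' := hV (c ++ [y] ++ [x] ++ p) (by simpa using hp) h
      have := congrArg List.length h'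
      simp at this

end flows

/-! ### Part 3: injectivity on products of good words -/

section injectivity

theorem phi_le {m : ℕ} (φ : FreeGroup (Fin m) → ℤ)
    (hφ : ∀ x y : FreeGroup (Fin m), φ (x * y) = φ x + φ y) (C : ℤ)
    (hC : ∀ ℓ : Fin m × Bool, φ (FreeGroup.mk [ℓ]) ≤ C) (w : List (Fin m × Bool)) :
    φ (FreeGroup.mk w) ≤ C * w.length := by
  induction w with
  | nil => simp [phi_nil φ hφ]
  | cons x w ih =>
    rw [phi_cons φ hφ]
    have := hC x
    push_cast [List.length_cons]
    linarith

theorem phi_ge {m : ℕ} (φ : FreeGroup (Fin m) → ℤ)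
    (hφ : ∀ x y : FreeGroup (Fin m), φ (x * y) = φ x + φ y) (C : ℤ)
    (hC : ∀ ℓ : Fin m × Bool, φ (FreeGroup.mk [ℓ]) ≤ C) (w : List (Fin m × Bool)) :
    -(C * w.length) ≤ φ (FreeGroup.mk w) := by
  have h := phi_le φ hφ C hC (w.map linv)
  rw [phi_map_linv φ hφ] at h
  simp only [List.length_map] at h
  linarith

theorem C_pos {m : ℕ} (φ : FreeGroup (Fin m) → ℤ)
    (hφ : ∀ x y : FreeGroup (Fin m), φ (x * y) = φ x + φ y)
    (hsurj : Function.Surjective φ) (C : ℤ)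
    (hC : ∀ ℓ : Fin m × Bool, φ (FreeGroup.mk [ℓ]) ≤ C) : 0 < C := by
  obtain ⟨g, hg⟩ := hsurj 1
  have h := phi_le φ hφ C hC g.toWord
  rw [FreeGroup.mk_toWord, hg] at h
  by_contra hc
  have : C * (g.toWord.length : ℤ) ≤ 0 := mul_nonpos_of_nonpos_of_nonneg (by linarith) (by positivity)
  linarith

theorem prefix_append_cases {α : Type*} {p w t : List α} (h : p <+: w ++ t) :
    p <+: w ∨ ∃ p', p = w ++ p' ∧ p' <+: t := by
  obtain ⟨s, hs⟩ := h
  rcases List.append_eq_append_iff.1 hs with ⟨u, h1, h2⟩ | ⟨u, h1, h2⟩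
  · exact Or.inl ⟨u, h1.symm⟩
  · exact Or.inr ⟨u, h1, s, h2.symm⟩

theorem flatten_height {m k : ℕ} (hk : 4 ≤ k) (φ : FreeGroup (Fin m) → ℤ)
    (hφ : ∀ x y : FreeGroup (Fin m), φ (x * y) = φ x + φ y)
    (a : Fin m × Bool) (hpos : 0 < φ (FreeGroup.mk [a]))
    (ha : ∀ ℓ : Fin m × Bool, φ (FreeGroup.mk [ℓ]) ≤ φ (FreeGroup.mk [a]))
    (ws : List (List (Fin m × Bool))) (hws : ∀ w ∈ ws, GW φ a k w)
    (p : List (Fin m × Bool)) (hp : p <+: ws.flatten) :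
    (p.length : ℤ) + 1 ≤ k * (φ (FreeGroup.mk p) + (k - 3) * φ (FreeGroup.mk [a]) + 1) := by
  have hk' : (4 : ℤ) ≤ k := by exact_mod_cast hk
  set C := φ (FreeGroup.mk [a]) with hCdef
  have hC3 : 0 ≤ ((k : ℤ) - 3) * C := mul_nonneg (by linarith) hpos.le
  induction ws generalizing p with
  | nil =>
    have : p = [] := by simpa using hp
    subst this
    rw [phi_nil φ hφ]
    simp only [List.length_nil]
    push_cast
    nlinarith
  | cons w ws ih =>
    have hw := hws w (by simp)
    have hws' : ∀ v ∈ ws, GW φ a k v := fun v hv => hws v (by simp [hv])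
    obtain ⟨⟨hr, hl, hh, hla⟩, hwpos⟩ := hw
    rw [List.flatten_cons] at hp
    rcases prefix_append_cases hp with hp | ⟨p', rfl, hp'⟩
    · have hple := hp.length_le
      rcases hple.lt_or_eq with hlt | heq
      · have hlt' : (p.length : ℤ) + 1 ≤ k := by rw [hl] at hlt; exact_mod_cast hlt
        have : 0 ≤ φ (FreeGroup.mk p) + (k - 3) * C := by
          cases p with
          | nil => rw [phi_nil φ hφ]; linarith
          | cons x p =>
            have hx : x = a := by
              obtain ⟨t, ht⟩ := hp
              rw [← ht] at hh
              simpa using hh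
            subst hx
            rw [phi_cons φ hφ]
            have := phi_ge φ hφ C ha p
            push_cast [List.length_cons] at hlt'
            have h3 : C * (p.length : ℤ) ≤ C * (k - 2) :=
              mul_le_mul_of_nonneg_left (by linarith) hpos.le
            rw [← hCdef]
            nlinarith
        nlinarith
      · have : p = w := hp.eq_of_length heq
        subst this
        rw [hl]
        nlinarith
    · have := ih hws' p' hp'
      rw [phi_append φ hφ]
      push_cast [List.length_append]
      rw [hl]
      nlinarith

theorem flatten_red {m k : ℕ} (φ : FreeGroup (Fin m) → ℤ)
    (a : Fin m × Bool)
    (ws : List (List (Fin m × Bool))) (hws : ∀ w ∈ ws, GW φ a k w) :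
    FreeGroup.IsReduced ws.flatten ∧ ∀ x ∈ ws.flatten.head?, x = a := by
  induction ws with
  | nil => simp [FreeGroup.IsReduced.nil]
  | cons w ws ih =>
    obtain ⟨⟨hr, hl, hh, hla⟩, hwpos⟩ := hws w (by simp)
    obtain ⟨h1, h2⟩ := ih (fun v hv => hws v (by simp [hv]))
    rw [List.flatten_cons]
    constructor
    · rw [red_append]
      refine ⟨hr, h1, ?_⟩
      intro x hx y hy hxy
      have hy' := h2 y hy
      rw [hy'] at hxy
      apply hla
      rw [hx, hxy, linv_linv]
    · intro x hx
      cases w with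
      | nil => simp at hh
      | cons z w =>
        simp only [List.head?_cons, Option.some.injEq] at hh
        simp only [List.cons_append, List.head?_cons, Option.mem_def, Option.some.injEq] at hx
        rw [← hx, hh]

theorem avoid {m k : ℕ} (hk : 4 ≤ k) (φ : FreeGroup (Fin m) → ℤ)
    (hφ : ∀ x y : FreeGroup (Fin m), φ (x * y) = φ x + φ y)
    (a : Fin m × Bool) (hpos : 0 < φ (FreeGroup.mk [a]))
    (ha : ∀ ℓ : Fin m × Bool, φ (FreeGroup.mk [ℓ]) ≤ φ (FreeGroup.mk [a]))
    (R : Subgroup (FreeGroup (Fin m))) [R.Normal]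
    (hker : ∀ g ∈ R, φ g = 0)
    (hρ : ∀ g ∈ R, g ≠ 1 →
      φ (FreeGroup.mk [a]) * k * (2 * (k : ℤ) - 3) + 2 * k - 1 ≤ (FreeGroup.norm g : ℤ))
    (ws : List (List (Fin m × Bool))) (hws : ∀ w ∈ ws, GW φ a k w)
    (d p : List (Fin m × Bool)) (hdr : FreeGroup.IsReduced d) (hdl : d.length ≤ k)
    (hdh : d.head? = some a) (hp : p <+: ws.flatten)
    (hpd : (QuotientGroup.mk (FreeGroup.mk p) : FreeGroup (Fin m) ⧸ R) =
      QuotientGroup.mk (FreeGroup.mk d)) : p = d := by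
  by_contra hne
  have hk' : (4 : ℤ) ≤ k := by exact_mod_cast hk
  have hdl' : (d.length : ℤ) ≤ k := by exact_mod_cast hdl
  obtain ⟨hfr, hfh⟩ := flatten_red φ a ws hws
  have hpr : FreeGroup.IsReduced p := hfr.infix hp.isInfix
  have hmem := QuotientGroup.eq.1 hpd
  have hne1 : (FreeGroup.mk p)⁻¹ * FreeGroup.mk d ≠ 1 := by
    intro h
    have h' : FreeGroup.mk p = FreeGroup.mk d := inv_mul_eq_one.1 h
    have := FreeGroup.reduce.sound h'
    rw [hpr.reduce_eq, hdr.reduce_eq] at this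
    exact hne this
  have hb := hρ _ hmem hne1
  have hφ0 := hker _ hmem
  have hφeq : φ (FreeGroup.mk p) = φ (FreeGroup.mk d) := by
    have := hφ (FreeGroup.mk p) ((FreeGroup.mk p)⁻¹ * FreeGroup.mk d)
    rw [hφ0, mul_inv_cancel_left] at this
    linarith
  have hle := phi_le φ hφ _ ha d
  have hht := flatten_height hk φ hφ a hpos ha ws hws p hp
  set C := φ (FreeGroup.mk [a])
  have hφk : φ (FreeGroup.mk p) ≤ C * k := by
    rw [hφeq]
    exact hle.trans (mul_le_mul_of_nonneg_left hdl' hpos.le)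
  cases p with
  | nil =>
    have hn : FreeGroup.norm ((FreeGroup.mk [])⁻¹ * FreeGroup.mk d) ≤ d.length := by
      rw [← FreeGroup.one_eq_mk, inv_one, one_mul]
      exact FreeGroup.norm_mk_le
    have hn' : (FreeGroup.norm ((FreeGroup.mk [])⁻¹ * FreeGroup.mk d) : ℤ) ≤ d.length := by
      exact_mod_cast hn
    have h1 : 0 ≤ C * k * (2 * (k : ℤ) - 3) :=
      mul_nonneg (mul_nonneg hpos.le (by linarith)) (by linarith)
    linarith
  | cons x p =>
    have hx : x = a := by
      apply hfh
      obtain ⟨t, ht⟩ := hp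
      rw [← ht]; simp
    subst hx
    cases d with
    | nil => simp at hdh
    | cons z d =>
      simp only [List.head?_cons, Option.some.injEq] at hdh
      subst hdh
      have hn : FreeGroup.norm ((FreeGroup.mk (z :: p))⁻¹ * FreeGroup.mk (z :: d)) ≤
          p.length + d.length := by
        have e : (FreeGroup.mk (z :: p))⁻¹ * FreeGroup.mk (z :: d) =
            (FreeGroup.mk p)⁻¹ * FreeGroup.mk d := by
          rw [mk_cons z p, mk_cons z d]; group
        rw [e]
        refine (FreeGroup.norm_mul_le _ _).trans ?_
        rw [FreeGroup.norm_inv_eq]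
        exact add_le_add FreeGroup.norm_mk_le FreeGroup.norm_mk_le
      have hn' : (FreeGroup.norm ((FreeGroup.mk (z :: p))⁻¹ * FreeGroup.mk (z :: d)) : ℤ) ≤
          p.length + d.length := by
        exact_mod_cast hn
      push_cast [List.length_cons] at hdl' hht
      have h5 : (k : ℤ) * (φ (FreeGroup.mk (z :: p)) + (k - 3) * C + 1) ≤
          k * (C * k + (k - 3) * C + 1) :=
        mul_le_mul_of_nonneg_left (by linarith) (by linarith)
      nlinarith

theorem exists_diverge {α : Type*} (w v : List α) (hl : w.length = v.length) (hne : w ≠ v) :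
    ∃ c x y w' v', w = c ++ x :: w' ∧ v = c ++ y :: v' ∧ x ≠ y := by
  induction w generalizing v with
  | nil =>
    exfalso
    apply hne
    exact (List.length_eq_zero_iff.1 hl.symm).symm
  | cons z w ih =>
    cases v with
    | nil => simp at hl
    | cons t v =>
      by_cases h : z = t
      · subst h
        obtain ⟨c, x, y, w', v', h1, h2, h3⟩ := ih v (by simpa using hl) (by simpa using hne)
        exact ⟨z :: c, x, y, w', v', by simp [h1], by simp [h2], h3⟩
      · exact ⟨[], z, t, w, v, rfl, rfl, h⟩

theorem flatten_inj {m k : ℕ} (hk : 4 ≤ k) (φ : FreeGroup (Fin m) → ℤ)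
    (hφ : ∀ x y : FreeGroup (Fin m), φ (x * y) = φ x + φ y)
    (a : Fin m × Bool) (hpos : 0 < φ (FreeGroup.mk [a]))
    (ha : ∀ ℓ : Fin m × Bool, φ (FreeGroup.mk [ℓ]) ≤ φ (FreeGroup.mk [a]))
    (R : Subgroup (FreeGroup (Fin m))) [R.Normal]
    (hker : ∀ g ∈ R, φ g = 0)
    (hρ : ∀ g ∈ R, g ≠ 1 →
      φ (FreeGroup.mk [a]) * k * (2 * (k : ℤ) - 3) + 2 * k - 1 ≤ (FreeGroup.norm g : ℤ))
    (ws vs : List (List (Fin m × Bool))) (hws : ∀ w ∈ ws, GW φ a k w)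
    (hvs : ∀ w ∈ vs, GW φ a k w) (hlen : ws.length = vs.length)
    (heq : (QuotientGroup.mk (FreeGroup.mk ws.flatten) : FreeGroup (Fin m) ⧸ ⁅R, R⁆) =
      QuotientGroup.mk (FreeGroup.mk vs.flatten)) : ws = vs := by
  induction ws generalizing vs with
  | nil => exact (List.length_eq_zero_iff.1 hlen.symm).symm
  | cons w ws ih =>
    cases vs with
    | nil => simp at hlen
    | cons v vs =>
      have hw := hws w (by simp)
      have hv := hvs v (by simp)
      by_cases hwv : w = v
      · subst hwv
        rw [List.flatten_cons, List.flatten_cons, ← FreeGroup.mul_mk, ← FreeGroup.mul_mk,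
          QuotientGroup.mk_mul, QuotientGroup.mk_mul] at heq
        rw [ih vs (fun u hu => hws u (by simp [hu])) (fun u hu => hvs u (by simp [hu]))
          (by simpa using hlen) (mul_left_cancel heq)]
      · exfalso
        obtain ⟨c, x, y, w', v', h1, h2, h3⟩ := exists_diverge w v
          (by rw [hw.1.2.1, hv.1.2.1]) hwv
        have hc : c.head? = some a := by
          have g1 := hw.1.2.2.1
          have g2 := hv.1.2.2.1
          rw [h1] at g1
          rw [h2] at g2
          cases c with
          | nil =>
            simp only [List.nil_append, List.head?_cons, Option.some.injEq] at g1 g2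
            exact absurd (g1.trans g2.symm) h3
          | cons z c => simpa using g1
        have hcy : (c ++ [y]).head? = some a := by
          cases c with
          | nil => simp at hc
          | cons z c => simpa using hc
        have hvf := (flatten_red φ a (v :: vs) hvs).1
        have hcl : (c ++ [y]).length ≤ k := by
          rw [← hv.1.2.1, h2]; simp
        have eV : (v :: vs).flatten = c ++ y :: (v' ++ vs.flatten) := by
          rw [List.flatten_cons, h2]; simp
        have eW : (w :: ws).flatten = c ++ x :: (w' ++ ws.flatten) := by
          rw [List.flatten_cons, h1]; simp
        have hcr : FreeGroup.IsReduced (c ++ [y]) := by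
          apply hvf.infix
          rw [eV]
          exact ⟨[], v' ++ vs.flatten, by simp⟩
        have hR1 : ∀ j, FreeGroup.of j ∉ R := by
          intro j hj
          have := hρ _ hj (FreeGroup.of_ne_one j)
          rw [FreeGroup.norm_of] at this
          have hk' : (4 : ℤ) ≤ k := by exact_mod_cast hk
          have h1 : 0 ≤ φ (FreeGroup.mk [a]) * k * (2 * (k : ℤ) - 3) :=
            mul_nonneg (mul_nonneg hpos.le (by linarith)) (by linarith)
          push_cast at this
          linarith
        refine separation R hR1 c (v' ++ vs.flatten) (w :: ws).flatten y (eV ▸ hvf) ?_ ?_ ?_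
        · intro p hp h
          have := avoid hk φ hφ a hpos ha R hker hρ (w :: ws) hws _ p hcr hcl hcy hp h
          rw [this, eW, List.prefix_append_right_inj] at hp
          simp only [List.cons_prefix_cons] at hp
          exact h3 hp.1.symm
        · intro p hp h
          rw [← eV] at hp
          exact avoid hk φ hφ a hpos ha R hker hρ (v :: vs) hvs _ p hcr hcl hcy hp h
        · rw [← eV, heq]

end injectivity

/-! ### Part 4: growth -/

theorem ball_bound {m : ℕ} {G : Type*} [Group G] (σ : Fin m → G) (n : ℕ) :
    (ball σ n).Finite ∧ (ball σ n).ncard ≤ (2 * m + 1) ^ n := by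
  induction n with
  | zero =>
    have : ball σ 0 ⊆ {1} := by
      rintro g ⟨w, hw, rfl⟩
      have : w = [] := List.length_eq_zero_iff.1 (Nat.le_zero.1 hw)
      subst this
      simp [wordEval]
    exact ⟨(Set.finite_singleton _).subset this, by
      simpa using Set.ncard_le_ncard this⟩
  | succ n ih =>
    obtain ⟨h1, h2⟩ := ih
    let F : Option (Fin m × Bool) × G → G := fun p =>
      (match p.1 with
        | none => 1
        | some ℓ => if ℓ.2 then σ ℓ.1 else (σ ℓ.1)⁻¹) * p.2
    have hsub : ball σ (n + 1) ⊆ F '' (Set.univ ×ˢ ball σ n) := by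
      rintro g ⟨w, hw, rfl⟩
      cases w with
      | nil => exact ⟨(none, wordEval σ []), ⟨trivial, [], by simp, rfl⟩, by simp [F]⟩
      | cons x w =>
        exact ⟨(some x, wordEval σ w), ⟨trivial, w, by simpa using hw, rfl⟩, by
          simp [F, wordEval]⟩
    have hfin : (Set.univ ×ˢ ball σ n : Set (Option (Fin m × Bool) × G)).Finite :=
      Set.finite_univ.prod h1
    refine ⟨(hfin.image F).subset hsub, ?_⟩
    calc (ball σ (n + 1)).ncard ≤ (F '' (Set.univ ×ˢ ball σ n)).ncard :=
          Set.ncard_le_ncard hsub (hfin.image F)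
      _ ≤ (Set.univ ×ˢ ball σ n : Set (Option (Fin m × Bool) × G)).ncard :=
          Set.ncard_image_le hfin
      _ = (2 * m + 1) * (ball σ n).ncard := by
          rw [Set.ncard_prod, Set.ncard_univ]; simp [mul_comm]
      _ ≤ (2 * m + 1) * (2 * m + 1) ^ n := Nat.mul_le_mul_left _ h2
      _ = (2 * m + 1) ^ (n + 1) := by ring

theorem wordEval_mk {m : ℕ} (N : Subgroup (FreeGroup (Fin m))) [N.Normal]
    (w : List (Fin m × Bool)) :
    wordEval (fun i => (QuotientGroup.mk (FreeGroup.of i) : FreeGroup (Fin m) ⧸ N)) w =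
      QuotientGroup.mk (FreeGroup.mk w) := by
  induction w with
  | nil => rfl
  | cons x w ih =>
    rw [mk_cons, QuotientGroup.mk_mul, ← ih]
    rcases x with ⟨j, b⟩
    cases b
    · rw [mk_false]; simp [wordEval]
    · rw [mk_true]; simp [wordEval]

theorem growth_ge {m : ℕ} {G : Type*} [Group G] (σ : Fin m → G) (k N : ℕ) (hk : 0 < k)
    (h : ∀ n, N ^ n ≤ (ball σ (n * k)).ncard) :
    (N : ℝ) ^ (1 / (k : ℝ)) ≤ growthRate σ := by
  unfold growthRate
  apply Filter.le_limsup_of_frequently_le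
  · rw [Filter.frequently_atTop]
    intro n
    refine ⟨(n + 1) * k, by nlinarith, ?_⟩
    have h1 : ((N : ℝ) ^ (n + 1)) ≤ ((ball σ ((n + 1) * k)).ncard : ℝ) := by
      exact_mod_cast h (n + 1)
    have hk0 : (k : ℝ) ≠ 0 := by positivity
    have hn0 : ((n + 1 : ℕ) : ℝ) ≠ 0 := by positivity
    calc (N : ℝ) ^ (1 / (k : ℝ)) = ((N : ℝ) ^ (n + 1)) ^ (1 / (((n + 1) * k : ℕ) : ℝ)) := by
          rw [← Real.rpow_natCast, ← Real.rpow_mul (by positivity)]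
          congr 1
          push_cast at hn0 ⊢
          field_simp
      _ ≤ _ := Real.rpow_le_rpow (by positivity) h1 (by positivity)
  · refine Filter.isBoundedUnder_of ⟨2 * m + 1, ?_⟩
    intro n
    rcases Nat.eq_zero_or_pos n with rfl | hn
    · simp only [CharP.cast_eq_zero, div_zero, Real.rpow_zero]
      linarith [Nat.cast_nonneg (α := ℝ) m]
    · have h1 : ((ball σ n).ncard : ℝ) ≤ (2 * m + 1 : ℝ) ^ n := by
        exact_mod_cast (ball_bound σ n).2
      calc ((ball σ n).ncard : ℝ) ^ (1 / (n : ℝ)) ≤ ((2 * m + 1 : ℝ) ^ n) ^ (1 / (n : ℝ)) :=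
            Real.rpow_le_rpow (by positivity) h1 (by positivity)
        _ = 2 * m + 1 := by
            rw [one_div, Real.pow_rpow_inv_natCast (by positivity) hn.ne']

/-- Theorem 1. Let `R ⊴ F_m` be contained in the kernel of the
surjective homomorphism `φ : F_m → ℤ`, let `a` be a letter of maximal `φ`-value and
`C = φ(a)`. If `k ≥ 4` satisfies `ρ(R) ≥ Ck(2k-3) + 2k - 1` (every nontrivial element of
`R` has length at least this bound), then the growth rate of `F_m/R'` with respect to the
natural generators is at least `(2m-1) · (4m(m-1)²/(2m-1)⁴)^(1/k)`. -/
theorem growth_rate_lower_bound (m k : ℕ) (hm : 2 ≤ m) (hk : 4 ≤ k)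
    (φ : FreeGroup (Fin m) → ℤ)
    (hφ : ∀ x y : FreeGroup (Fin m), φ (x * y) = φ x + φ y)
    (hsurj : Function.Surjective φ)
    (a : Fin m × Bool)
    (ha : ∀ ℓ : Fin m × Bool, φ (FreeGroup.mk [ℓ]) ≤ φ (FreeGroup.mk [a]))
    (R : Subgroup (FreeGroup (Fin m))) [R.Normal]
    (hker : ∀ g ∈ R, φ g = 0)
    (hρ : ∀ g ∈ R, g ≠ 1 →
      φ (FreeGroup.mk [a]) * k * (2 * (k : ℤ) - 3) + 2 * k - 1 ≤ (FreeGroup.norm g : ℤ)) :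
    (2 * (m : ℝ) - 1) *
        ((4 * (m : ℝ) * ((m : ℝ) - 1) ^ 2) / (2 * (m : ℝ) - 1) ^ 4) ^ (1 / (k : ℝ)) ≤
      growthRate (fun i =>
        (QuotientGroup.mk (FreeGroup.of i) : FreeGroup (Fin m) ⧸ ⁅R, R⁆)) := by
  classical
  have hpos := C_pos φ hφ hsurj _ ha
  obtain ⟨n, rfl⟩ : ∃ n, k = n + 4 := ⟨k - 4, by omega⟩
  obtain ⟨S, hS, hSG⟩ := exists_GW φ hφ a hpos (n + 2)
  refine le_trans ?_ (growth_ge _ (n + 4) S.card (by omega) ?_)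
  · obtain ⟨l, rfl⟩ : ∃ l, m = l + 2 := ⟨m - 2, by omega⟩
    have e1 : 2 * (l + 2) - 1 = 2 * l + 3 := by omega
    have e2 : 2 * (l + 2) - 2 = 2 * l + 2 := by omega
    rw [e1, e2] at hS
    have hS' : (2 * (l : ℝ) + 3) ^ (n + 2) * (2 * l + 2) ≤ 2 * (S.card : ℝ) := by
      exact_mod_cast hS
    have hl : (0 : ℝ) ≤ l := Nat.cast_nonneg l
    push_cast
    have eD : 2 * ((l : ℝ) + 2) - 1 = 2 * l + 3 := by ring
    rw [eD]
    set D : ℝ := 2 * l + 3 with hD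
    have hDpos : 0 < D := by positivity
    have hq : (0 : ℝ) ≤ 4 * (l + 2) * (l + 2 - 1) ^ 2 / D ^ 4 := by positivity
    have hk0 : ((n + 4 : ℕ) : ℝ) ≠ 0 := by positivity
    have e3 : D = (D ^ (n + 4)) ^ (1 / ((n : ℝ) + 4)) := by
      have := Real.pow_rpow_inv_natCast hDpos.le (show n + 4 ≠ 0 by omega)
      push_cast at this
      rw [one_div, this]
    nth_rewrite 1 [e3]
    rw [← Real.mul_rpow (by positivity) hq]
    apply Real.rpow_le_rpow (by positivity) _ (by positivity)
    have e4 : D ^ (n + 4) * (4 * ((l : ℝ) + 2) * (l + 2 - 1) ^ 2 / D ^ 4) =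
        D ^ n * (4 * ((l : ℝ) + 2) * (l + 2 - 1) ^ 2) := by
      rw [pow_add]; field_simp
    rw [e4]
    have hle : 4 * ((l : ℝ) + 2) * (l + 2 - 1) ^ 2 ≤ D ^ 2 * (l + 1) := by
      rw [hD]; nlinarith
    calc D ^ n * (4 * ((l : ℝ) + 2) * (l + 2 - 1) ^ 2) ≤ D ^ n * (D ^ 2 * (l + 1)) :=
          mul_le_mul_of_nonneg_left hle (by positivity)
      _ = D ^ (n + 2) * (2 * l + 2) / 2 := by ring
      _ ≤ S.card := by linarith
  · intro t
    obtain ⟨hfin, -⟩ := ball_bound (fun i =>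
        (QuotientGroup.mk (FreeGroup.of i) : FreeGroup (Fin m) ⧸ ⁅R, R⁆)) (t * (n + 4))
    have : Finite (ball (fun i =>
        (QuotientGroup.mk (FreeGroup.of i) : FreeGroup (Fin m) ⧸ ⁅R, R⁆)) (t * (n + 4))) := hfin
    have hgood : ∀ f : Fin t → S, ∀ w ∈ List.ofFn (fun i => (f i : List (Fin m × Bool))),
        GW φ a (n + 4) w := by
      intro f w hw
      rw [List.mem_ofFn] at hw
      obtain ⟨i, rfl⟩ := hw
      exact hSG _ (f i).2
    let Φ : (Fin t → S) → ball (fun i =>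
        (QuotientGroup.mk (FreeGroup.of i) : FreeGroup (Fin m) ⧸ ⁅R, R⁆)) (t * (n + 4)) :=
      fun f => ⟨QuotientGroup.mk (FreeGroup.mk
          (List.ofFn (fun i => (f i : List (Fin m × Bool)))).flatten),
        (List.ofFn (fun i => (f i : List (Fin m × Bool)))).flatten, by
          rw [List.length_flatten, List.map_ofFn, List.sum_ofFn]
          apply le_of_eq
          have hl : ∀ i, (f i : List (Fin m × Bool)).length = n + 4 :=
            fun i => (hSG _ (f i).2).1.2.1
          simp [hl], wordEval_mk _ _⟩
    have hΦ : Function.Injective Φ := by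
      intro f g hfg
      have h1 := flatten_inj hk φ hφ a hpos ha R hker hρ _ _ (hgood f) (hgood g) (by simp)
        (congrArg Subtype.val hfg)
      have h2 := List.ofFn_injective h1
      funext i
      exact Subtype.ext (congrFun h2 i)
    have hc := Nat.card_le_card_of_injective Φ hΦ
    rw [Nat.card_coe_set_eq] at hc
    simpa using hc
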